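/- arXiv:2409.00913 — 2 statements merged into one kernel-verified Lean document; each statement's English description precedes it below -/
import Mathlib

section
/- Let f : ℝⁿ → ℝ be a differentiable convex function with f(0) = 0 and f(x) ≥ 0 for all x, and let g : ℝⁿ → ℝ be a differentiable convex function. Let τ : [0,∞) → [0,∞) be a continuously differentiable function with τ(0) = 0, τ'(t) > 0 for all t, and τ(t) → ∞ as t → ∞. Suppose Z : [0,∞) → ℝⁿ is differentiable and the curve t ↦ ∇g(Z(t)) is differentiable with derivative (d/dt)∇g(Z(t)) = −τ'(t)·∇f(Z(t)) for every t ≥ 0. Then for all t ≥ 0, (τ(t) + 1)·f(Z(t)) ≤ D_g(0, Z(0)) + f(Z(0)); in particular f(Z(t)) = O(1/τ(t)). -/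
open Set RealInnerProductSpace

/-- Bregman divergence `D_g(y, x) = g(y) − g(x) − ⟨∇g(x), y − x⟩`, where `g'`
is the gradient map of `g`. -/
noncomputable def breg {n : ℕ} (g : EuclideanSpace ℝ (Fin n) → ℝ)
    (g' : EuclideanSpace ℝ (Fin n) → EuclideanSpace ℝ (Fin n))
    (y x : EuclideanSpace ℝ (Fin n)) : ℝ :=
  g y - g x - ⟪g' x, y - x⟫

lemma grad_ineq_aux {n : ℕ} (f : EuclideanSpace ℝ (Fin n) → ℝ)
    (f' : EuclideanSpace ℝ (Fin n) → EuclideanSpace ℝ (Fin n))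
    (hf' : ∀ x, HasGradientAt f (f' x) x) (hfconv : ConvexOn ℝ univ f)
    (x y : EuclideanSpace ℝ (Fin n)) : f x + ⟪f' x, y - x⟫ ≤ f y := by
  have hc : ConvexOn ℝ univ (f ∘ (AffineMap.lineMap x y : ℝ →ᵃ[ℝ] _)) := by
    simpa using hfconv.comp_affineMap (AffineMap.lineMap x y : ℝ →ᵃ[ℝ] _)
  have hd : HasDerivAt (f ∘ (AffineMap.lineMap x y : ℝ →ᵃ[ℝ] _)) ⟪f' x, y - x⟫ 0 := by
    have h1 : HasDerivAt (AffineMap.lineMap x y : ℝ →ᵃ[ℝ] _) (y - x) (0:ℝ) :=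
      AffineMap.hasDerivAt_lineMap
    have h2 := (hf' x).hasFDerivAt
    have h3 := HasFDerivAt.comp_hasDerivAt_of_eq (0:ℝ) h2 h1 (by simp)
    simpa using h3
  have h := hc.le_slope_of_hasDerivAt (mem_univ 0) (mem_univ 1) zero_lt_one hd
  simp [slope_def_field] at h
  linarith

/-- `O(1/τ(t))` convergence of the quasi-gradient flow
`(d/dt)∇g(Z) = −τ'(t)∇f(Z)` for convex objectives. -/
theorem qgf_convex_rate {n : ℕ}
    (f g : EuclideanSpace ℝ (Fin n) → ℝ)
    (f' g' : EuclideanSpace ℝ (Fin n) → EuclideanSpace ℝ (Fin n))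
    (hf' : ∀ x, HasGradientAt f (f' x) x)
    (hg' : ∀ x, HasGradientAt g (g' x) x)
    (hfconv : ConvexOn ℝ univ f)
    (hgconv : ConvexOn ℝ univ g)
    (hf0 : f 0 = 0)
    (hfnn : ∀ x, 0 ≤ f x)
    (τ τ' : ℝ → ℝ)
    (hτ0 : τ 0 = 0)
    (hτnn : ∀ t, 0 ≤ t → 0 ≤ τ t)
    (hτ : ∀ t, 0 ≤ t → HasDerivAt τ (τ' t) t)
    (hτ'cont : ContinuousOn τ' (Ici 0))
    (hτ'pos : ∀ t, 0 ≤ t → 0 < τ' t)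
    (hτinf : Filter.Tendsto τ Filter.atTop Filter.atTop)
    (Z Z' : ℝ → EuclideanSpace ℝ (Fin n))
    (hZ : ∀ t, 0 ≤ t → HasDerivAt Z (Z' t) t)
    (hODE : ∀ t, 0 ≤ t →
      HasDerivAt (fun u => g' (Z u)) (-(τ' t) • f' (Z t)) t) :
    ∀ t, 0 ≤ t → (τ t + 1) * f (Z t) ≤ breg g g' 0 (Z 0) + f (Z 0) := by
  have hder : ∀ t, 0 ≤ t → HasDerivAt
      (fun u => (τ u + 1) * f (Z u) + (g 0 - g (Z u) + ⟪g' (Z u), Z u⟫))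
      (τ' t * (f (Z t) - ⟪f' (Z t), Z t⟫) + (τ t + 1) * ⟪f' (Z t), Z' t⟫) t := by
    intro t ht
    have h1 : HasDerivAt (fun u => f (Z u)) ⟪f' (Z t), Z' t⟫ t := by
      simpa [Function.comp_def] using (hf' (Z t)).hasFDerivAt.comp_hasDerivAt t (hZ t ht)
    have h2 : HasDerivAt (fun u => g (Z u)) ⟪g' (Z t), Z' t⟫ t := by
      simpa [Function.comp_def] using (hg' (Z t)).hasFDerivAt.comp_hasDerivAt t (hZ t ht)
    have h3 := (hODE t ht).inner ℝ (hZ t ht)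
    have h4 := (((hτ t ht).add_const 1).mul h1).add ((h2.const_sub (g 0)).add h3)
    refine h4.congr_deriv ?_
    rw [real_inner_smul_left]
    ring
  have hmono : ∀ t, 0 ≤ t → ⟪f' (Z t), Z' t⟫ ≤ 0 := by
    intro t ht
    have h1 := hasDerivAt_iff_tendsto_slope.1 (hODE t ht)
    have h2 := hasDerivAt_iff_tendsto_slope.1 (hZ t ht)
    have h3 := h1.inner (𝕜 := ℝ) h2
    have h4 : 0 ≤ ⟪-(τ' t) • f' (Z t), Z' t⟫ := by
      refine ge_of_tendsto' h3 fun u => ?_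
      have a := grad_ineq_aux g g' hg' hgconv (Z u) (Z t)
      have b := grad_ineq_aux g g' hg' hgconv (Z t) (Z u)
      have c : 0 ≤ ⟪g' (Z u) - g' (Z t), Z u - Z t⟫ := by
        rw [inner_sub_left]
        rw [← neg_sub (Z u) (Z t), inner_neg_right] at a
        linarith
      simp only [slope, vsub_eq_sub, real_inner_smul_left, real_inner_smul_right]
      rw [← mul_assoc]
      exact mul_nonneg (mul_self_nonneg _) c
    rw [real_inner_smul_left] at h4
    have := hτ'pos t ht
    by_contra! hc
    nlinarith [mul_pos this hc]
  have hanti : AntitoneOn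
      (fun u => (τ u + 1) * f (Z u) + (g 0 - g (Z u) + ⟪g' (Z u), Z u⟫)) (Ici 0) := by
    refine antitoneOn_of_hasDerivWithinAt_nonpos (convex_Ici 0)
      (fun u hu => (hder u hu).continuousAt.continuousWithinAt)
      (fun u hu => (hder u (interior_subset hu)).hasDerivWithinAt) ?_
    intro u hu
    have hu : 0 ≤ u := interior_subset hu
    have a := grad_ineq_aux f f' hf' hfconv (Z u) 0
    rw [zero_sub, inner_neg_right, hf0] at a
    have b := mul_nonneg (hτ'pos u hu).le (neg_nonneg.2 (by linarith : f (Z u) - ⟪f' (Z u), Z u⟫ ≤ 0))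
    have c := mul_nonneg (by linarith [hτnn u hu] : 0 ≤ τ u + 1) (neg_nonneg.2 (hmono u hu))
    linarith
  intro t ht
  have h := hanti (mem_Ici.2 le_rfl) (mem_Ici.2 ht) ht
  have a := grad_ineq_aux g g' hg' hgconv (Z t) 0
  simp only [breg, zero_sub, inner_neg_right, hτ0] at h a ⊢
  linarith
end

section
/- Let μ > 0, let g : ℝⁿ → ℝ be a differentiable convex function, and let f : ℝⁿ → ℝ be a differentiable function that is μ-uniformly convex with respect to g and satisfies f(0) = 0 and f(x) ≥ 0 for all x. Let τ : [0,∞) → [0,∞) be a continuously differentiable function with τ(0) = 0, τ'(t) > 0 for all t, and τ(t) → ∞ as t → ∞. Suppose Z : [0,∞) → ℝⁿ is differentiable and the curve t ↦ ∇g(Z(t)) is differentiable with derivative (d/dt)∇g(Z(t)) = −τ'(t)·∇f(Z(t)) for every t ≥ 0. Then for all t ≥ 0, f(Z(t)) ≤ exp(−μ·τ(t))·(μ·D_g(0, Z(0)) + f(Z(0))); in particular f(Z(t)) = O(exp(−μ·τ(t))). -/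
open Set RealInnerProductSpace

lemma qgf_breg_nonneg {n : ℕ} (g : EuclideanSpace ℝ (Fin n) → ℝ)
    (g' : EuclideanSpace ℝ (Fin n) → EuclideanSpace ℝ (Fin n))
    (hg' : ∀ x, HasGradientAt g (g' x) x)
    (hgconv : ConvexOn ℝ univ g) (y x : EuclideanSpace ℝ (Fin n)) : 0 ≤ breg g g' y x := by
  have hc : ConvexOn ℝ univ (g ∘ (AffineMap.lineMap x y : ℝ →ᵃ[ℝ] _)) := by
    simpa using hgconv.comp_affineMap (AffineMap.lineMap x y : ℝ →ᵃ[ℝ] _)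
  have hd : HasDerivAt (g ∘ (AffineMap.lineMap x y : ℝ →ᵃ[ℝ] _)) ⟪g' x, y - x⟫ 0 := by
    have h1 : HasDerivAt (AffineMap.lineMap x y : ℝ →ᵃ[ℝ] _) (y - x) (0:ℝ) :=
      AffineMap.hasDerivAt_lineMap
    have h2 := (hg' (AffineMap.lineMap x y (0:ℝ))).hasFDerivAt.comp_hasDerivAt (0:ℝ) h1
    simpa using h2
  have := hc.le_slope_of_hasDerivAt (mem_univ 0) (mem_univ 1) one_pos hd
  simp [slope_def_field] at this
  unfold breg
  linarith

lemma qgf_mono {n : ℕ} (g : EuclideanSpace ℝ (Fin n) → ℝ)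
    (g' : EuclideanSpace ℝ (Fin n) → EuclideanSpace ℝ (Fin n))
    (hg' : ∀ x, HasGradientAt g (g' x) x)
    (hgconv : ConvexOn ℝ univ g) (y x : EuclideanSpace ℝ (Fin n)) :
    0 ≤ ⟪g' y - g' x, y - x⟫ := by
  have h1 := qgf_breg_nonneg g g' hg' hgconv y x
  have h2 := qgf_breg_nonneg g g' hg' hgconv x y
  unfold breg at h1 h2
  rw [← neg_sub y x, inner_neg_right] at h2
  rw [inner_sub_left]
  linarith

lemma qgf_deriv_mono {n : ℕ} (G Z : ℝ → EuclideanSpace ℝ (Fin n))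
    (v w : EuclideanSpace ℝ (Fin n)) (t : ℝ)
    (hm : ∀ s, 0 ≤ ⟪G s - G t, Z s - Z t⟫)
    (hG : HasDerivAt G v t) (hZ : HasDerivAt Z w t) : 0 ≤ ⟪v, w⟫ := by
  have h := (hasDerivAt_iff_tendsto_slope.1 hG).inner (𝕜 := ℝ) (hasDerivAt_iff_tendsto_slope.1 hZ)
  refine ge_of_tendsto' h fun s => ?_
  rw [slope_def_module, slope_def_module, real_inner_smul_left, real_inner_smul_right, ← mul_assoc]
  exact mul_nonneg (mul_self_nonneg _) (hm s)

/-- `O(e^{−μτ(t)})` convergence of the quasi-gradient flow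
`(d/dt)∇g(Z) = −τ'(t)∇f(Z)` for `μ`-uniformly convex objectives. -/
theorem qgf_uniformly_convex_rate {n : ℕ} (μ : ℝ) (hμ : 0 < μ)
    (f g : EuclideanSpace ℝ (Fin n) → ℝ)
    (f' g' : EuclideanSpace ℝ (Fin n) → EuclideanSpace ℝ (Fin n))
    (hf' : ∀ x, HasGradientAt f (f' x) x)
    (hg' : ∀ x, HasGradientAt g (g' x) x)
    (hgconv : ConvexOn ℝ univ g)
    (hunif : ∀ x y, μ * breg g g' x y ≤ breg f f' x y)
    (hf0 : f 0 = 0)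
    (hfnn : ∀ x, 0 ≤ f x)
    (τ τ' : ℝ → ℝ)
    (hτ0 : τ 0 = 0)
    (hτnn : ∀ t, 0 ≤ t → 0 ≤ τ t)
    (hτ : ∀ t, 0 ≤ t → HasDerivAt τ (τ' t) t)
    (hτ'cont : ContinuousOn τ' (Ici 0))
    (hτ'pos : ∀ t, 0 ≤ t → 0 < τ' t)
    (hτinf : Filter.Tendsto τ Filter.atTop Filter.atTop)
    (Z Z' : ℝ → EuclideanSpace ℝ (Fin n))
    (hZ : ∀ t, 0 ≤ t → HasDerivAt Z (Z' t) t)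
    (hODE : ∀ t, 0 ≤ t →
      HasDerivAt (fun u => g' (Z u)) (-(τ' t) • f' (Z t)) t) :
    ∀ t, 0 ≤ t →
      f (Z t) ≤ Real.exp (-(μ * τ t)) * (μ * breg g g' 0 (Z 0) + f (Z 0)) := by
  have hE : ∀ t, 0 ≤ t → HasDerivAt
      (fun u => Real.exp (μ * τ u) * (μ * breg g g' 0 (Z u) + f (Z u)))
      (Real.exp (μ * τ t) * (μ * τ' t) * (μ * breg g g' 0 (Z t) + f (Z t)) +
        Real.exp (μ * τ t) * (μ * (-(τ' t) * ⟪f' (Z t), Z t⟫) + ⟪f' (Z t), Z' t⟫)) t := by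
    intro t ht
    have hfZ : HasDerivAt (fun u => f (Z u)) ⟪f' (Z t), Z' t⟫ t := by
      have h := (hf' (Z t)).hasFDerivAt.comp_hasDerivAt t (hZ t ht)
      rw [InnerProductSpace.toDual_apply_apply] at h
      exact h
    have hgZ : HasDerivAt (fun u => g (Z u)) ⟪g' (Z t), Z' t⟫ t := by
      have h := (hg' (Z t)).hasFDerivAt.comp_hasDerivAt t (hZ t ht)
      rw [InnerProductSpace.toDual_apply_apply] at h
      exact h
    have hin := (hODE t ht).inner ℝ (hZ t ht)
    have hD : HasDerivAt (fun u => breg g g' 0 (Z u)) (-(τ' t) * ⟪f' (Z t), Z t⟫) t := by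
      have h := (hgZ.const_sub (g 0)).add hin
      have e1 : (fun u => breg g g' 0 (Z u)) =
          (fun x => g 0 - g (Z x)) + fun t => ⟪g' (Z t), Z t⟫ := by
        funext u
        simp [breg, inner_neg_right]
      have e2 : -(τ' t) * ⟪f' (Z t), Z t⟫ =
          -⟪g' (Z t), Z' t⟫ + (⟪g' (Z t), Z' t⟫ + ⟪-(τ' t) • f' (Z t), Z t⟫) := by
        rw [real_inner_smul_left]; ring
      rw [e1, e2]
      exact h
    exact (((hτ t ht).const_mul μ).exp).mul ((hD.const_mul μ).add hfZ)
  have hanti : AntitoneOn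
      (fun u => Real.exp (μ * τ u) * (μ * breg g g' 0 (Z u) + f (Z u))) (Ici 0) := by
    refine antitoneOn_of_hasDerivWithinAt_nonpos (convex_Ici 0)
      (fun t ht => (hE t ht).continuousAt.continuousWithinAt)
      (fun t ht => (hE t (interior_subset ht)).hasDerivWithinAt) ?_
    intro t ht
    have ht0 : 0 ≤ t := interior_subset ht
    have hp := hτ'pos t ht0
    have hm := qgf_deriv_mono (fun u => g' (Z u)) Z _ _ t
      (fun s => qgf_mono g g' hg' hgconv (Z s) (Z t)) (hODE t ht0) (hZ t ht0)
    rw [real_inner_smul_left] at hm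
    have h1 : ⟪f' (Z t), Z' t⟫ ≤ 0 := by
      by_contra hcon
      push Not at hcon
      nlinarith [mul_pos hp hcon]
    have h2 := hunif 0 (Z t)
    have h3 : breg f f' 0 (Z t) = - f (Z t) + ⟪f' (Z t), Z t⟫ := by
      simp [breg, hf0, inner_neg_right]
    rw [h3] at h2
    have h4 : 0 ≤ (μ * τ' t) * (⟪f' (Z t), Z t⟫ - f (Z t) - μ * breg g g' 0 (Z t)) :=
      mul_nonneg (mul_pos hμ hp).le (by linarith)
    rw [mul_assoc, ← mul_add]
    exact mul_nonpos_of_nonneg_of_nonpos (Real.exp_pos _).le (by nlinarith)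
  intro t ht
  have h := hanti (mem_Ici.2 le_rfl) (mem_Ici.2 ht) ht
  simp only [hτ0, mul_zero, Real.exp_zero, one_mul] at h
  have hb := mul_nonneg hμ.le (qgf_breg_nonneg g g' hg' hgconv 0 (Z t))
  calc f (Z t) ≤ μ * breg g g' 0 (Z t) + f (Z t) := by linarith
    _ = Real.exp (-(μ * τ t)) * (Real.exp (μ * τ t) * (μ * breg g g' 0 (Z t) + f (Z t))) := by
      rw [← mul_assoc, ← Real.exp_add]; simp
    _ ≤ _ := mul_le_mul_of_nonneg_left h (Real.exp_pos _).le
end
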